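/- Let C and D be abelian categories with enough injectives, let π : C ⥤ D be an exact functor, and let u : D ⥤ C be a right adjoint of π which is fully faithful and exact. Fix a natural number d. If every object of C admits an injective resolution of length at most d (i.e., an exact sequence 0 → M → I⁰ → I¹ → ⋯ → I^d → 0 with every I^j injective), then every object of D admits an injective resolution of length at most d. -/

import Mathlib

open CategoryTheory Limits

/-- `M` admits an injective resolution of length at most `d`, i.e. an exact sequence
`0 → M → I⁰ → I¹ → ⋯ → I^d → 0` with every `I^j` injective.  We encode the sequence by
extending it by zero objects in degrees `> d`. -/
def HasInjectiveResolutionOfLength {C : Type*} [Category C] [Abelian C] (d : ℕ) (M : C) :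
    Prop :=
  ∃ (I : ℕ → C) (ι : M ⟶ I 0) (δ : ∀ j : ℕ, I j ⟶ I (j + 1))
    (w0 : ι ≫ δ 0 = 0) (w : ∀ j : ℕ, δ j ≫ δ (j + 1) = 0),
    (∀ j : ℕ, j ≤ d → Injective (I j)) ∧
    (∀ j : ℕ, d < j → IsZero (I j)) ∧
    Mono ι ∧
    (ShortComplex.mk ι (δ 0) w0).Exact ∧
    (∀ j : ℕ, (ShortComplex.mk (δ j) (δ (j + 1)) (w j)).Exact)

section InjectiveResolutionOfLength

variable {C : Type*} [Category C] [Abelian C]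

theorem exact_epi_comp_iff {W X Y Z : C} (p : W ⟶ X) [Epi p] (f : X ⟶ Y) (g : Y ⟶ Z)
    (w : (p ≫ f) ≫ g = 0) (w' : f ≫ g = 0) :
    (ShortComplex.mk (p ≫ f) g w).Exact ↔ (ShortComplex.mk f g w').Exact := by
  let φ : ShortComplex.mk (p ≫ f) g w ⟶ ShortComplex.mk f g w' :=
    { τ₁ := p, τ₂ := 𝟙 _, τ₃ := 𝟙 _ }
  have : Epi φ.τ₁ := ‹Epi p›
  have : IsIso φ.τ₂ := inferInstanceAs (IsIso (𝟙 Y))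
  have : Mono φ.τ₃ := inferInstanceAs (Mono (𝟙 Z))
  exact ShortComplex.exact_iff_of_epi_of_isIso_of_mono φ

theorem exact_comp_mono_iff {X Y Z W : C} (f : X ⟶ Y) (g : Y ⟶ Z) (i : Z ⟶ W) [Mono i]
    (w : f ≫ g ≫ i = 0) (w' : f ≫ g = 0) :
    (ShortComplex.mk f (g ≫ i) w).Exact ↔ (ShortComplex.mk f g w').Exact := by
  let φ : ShortComplex.mk f g w' ⟶ ShortComplex.mk f (g ≫ i) w :=
    { τ₁ := 𝟙 _, τ₂ := 𝟙 _, τ₃ := i }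
  have : Epi φ.τ₁ := inferInstanceAs (Epi (𝟙 X))
  have : IsIso φ.τ₂ := inferInstanceAs (IsIso (𝟙 Y))
  have : Mono φ.τ₃ := ‹Mono i›
  exact (ShortComplex.exact_iff_of_epi_of_isIso_of_mono φ).symm

theorem shortExact_cokernel {X Y : C} (f : X ⟶ Y) [Mono f] :
    (ShortComplex.mk f (cokernel.π f) (cokernel.condition f)).ShortExact where
  exact := ShortComplex.exact_cokernel f

theorem HasInjectiveResolutionOfLength.hasInjectiveDimensionLE {d : ℕ} {M : C}
    (h : HasInjectiveResolutionOfLength d M) : HasInjectiveDimensionLE M d := by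
  induction d generalizing M with
  | zero =>
    obtain ⟨I, ι, δ, w0, w, hI, hz, hι, e0, e⟩ := h
    have : Epi ι := e0.epi_f_iff.2 ((hz 1 one_pos).eq_of_tgt _ _)
    have : IsIso ι := isIso_of_mono_of_epi ι
    have : Injective M := Injective.of_iso (asIso ι).symm (hI 0 le_rfl)
    exact (inferInstance : HasInjectiveDimensionLT M 1)
  | succ d ih =>
    obtain ⟨I, ι, δ, w0, w, hI, hz, hι, e0, e⟩ := h
    refine ((shortExact_cokernel ι).hasInjectiveDimensionLT_X₃_iff d (hI 0 (Nat.zero_le _))).1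
      (ih ?_)
    have w1 : cokernel.desc ι (δ 0) w0 ≫ δ 1 = 0 := by
      rw [← cancel_epi (cokernel.π ι)]
      simp [w 0]
    refine ⟨fun j => I (j + 1), cokernel.desc ι (δ 0) w0, fun j => δ (j + 1), w1,
      fun j => w (j + 1), fun j hj => hI _ (by lia), fun j hj => hz _ (by lia),
      e0.mono_cokernelDesc, ?_, fun j => e (j + 1)⟩
    refine (exact_epi_comp_iff (cokernel.π ι) _ _ (by simp [w 0]) w1).1 ?_
    simpa using e 0

open ZeroObject in
theorem hasInjectiveResolutionOfLength_of_injective (d : ℕ) (M : C) [Injective M] :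
    HasInjectiveResolutionOfLength d M := by
  refine ⟨fun | 0 => M | _ + 1 => 0, 𝟙 M, fun _ => 0, comp_zero, fun _ => comp_zero,
    ?_, ?_, inferInstanceAs (Mono (𝟙 M)), ?_, fun j => ?_⟩
  · rintro (_ | j) -
    · assumption
    · exact inferInstanceAs (Injective (0 : C))
  · rintro (_ | j) hj
    · lia
    · exact isZero_zero C
  · exact (ShortComplex.exact_iff_epi _ rfl).2 (inferInstanceAs (Epi (𝟙 M)))
  · exact ShortComplex.exact_of_isZero_X₂ _ (isZero_zero C)

theorem hasInjectiveResolutionOfLength_succ {d : ℕ} {M J : C} [Injective J] (f : M ⟶ J) [Mono f]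
    (h : HasInjectiveResolutionOfLength d (cokernel f)) :
    HasInjectiveResolutionOfLength (d + 1) M := by
  obtain ⟨I, ι, δ, w0, w, hI, hz, hι, e0, e⟩ := h
  have w1 : (cokernel.π f ≫ ι) ≫ δ 0 = 0 := by simp [w0]
  refine ⟨fun | 0 => J | j + 1 => I j, f, fun | 0 => cokernel.π f ≫ ι | j + 1 => δ j,
    by simp, fun | 0 => w1 | j + 1 => w j, ?_, ?_, ‹_›, ?_, ?_⟩
  · rintro (_ | j) hj
    · assumption
    · exact hI j (by lia)
  · rintro (_ | j) hj
    · lia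
    · exact hz j (by lia)
  · exact (exact_comp_mono_iff _ _ ι (by simp) (cokernel.condition f)).2
      (ShortComplex.exact_cokernel f)
  · rintro (_ | j)
    · exact (exact_epi_comp_iff _ _ _ w1 w0).2 e0
    · exact e j

/-- A fully faithful exact right adjoint of an exact functor reflects upper bounds on the
injective dimension. -/
theorem hasInjectiveResolutionOfLength_of_hasInjectiveDimensionLE_obj
    {D : Type*} [Category D] [Abelian D] [EnoughInjectives D]
    {π : C ⥤ D} {u : D ⥤ C} (adj : π ⊣ u) [u.Full] [u.Faithful]
    [PreservesFiniteLimits π] [PreservesFiniteLimits u] [PreservesFiniteColimits u]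
    {d : ℕ} {N : D} (h : HasInjectiveDimensionLE (u.obj N) d) :
    HasInjectiveResolutionOfLength d N := by
  induction d generalizing N with
  | zero =>
    have : Injective N :=
      adj.injective_of_map_injective N ((injective_iff_hasInjectiveDimensionLT_one).2 h)
    exact hasInjectiveResolutionOfLength_of_injective 0 N
  | succ d ih =>
    refine hasInjectiveResolutionOfLength_succ (Injective.ι N) (ih ?_)
    exact (((shortExact_cokernel (Injective.ι N)).map_of_exact u).hasInjectiveDimensionLT_X₃_iff d
      (Injective.injective_of_adjoint adj (Injective.under N))).2 h

end InjectiveResolutionOfLength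

/-- If `π : C ⥤ D` is exact with fully faithful exact right adjoint `u : D ⥤ C`, and every
object of `C` has an injective resolution of length at most `d`, then so does every object
of `D`. -/
theorem injDim_le_of_exact_fully_faithful_right_adjoint
    {C D : Type*} [Category C] [Category D] [Abelian C] [Abelian D]
    [EnoughInjectives C] [EnoughInjectives D]
    (π : C ⥤ D) (u : D ⥤ C) (adj : π ⊣ u) [u.Full] [u.Faithful]
    [PreservesFiniteLimits π] [PreservesFiniteColimits π]
    [PreservesFiniteLimits u] [PreservesFiniteColimits u]
    (d : ℕ) (h : ∀ M : C, HasInjectiveResolutionOfLength d M) :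
    ∀ N : D, HasInjectiveResolutionOfLength d N := by
  exact fun N => hasInjectiveResolutionOfLength_of_hasInjectiveDimensionLE_obj adj
    (h (u.obj N)).hasInjectiveDimensionLE
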